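/- Let E be a real inner product space, v₁, …, vₙ ∈ E vectors whose Gram matrix K (Kᵢⱼ = ⟨vᵢ, vⱼ⟩) is positive definite, μ ∈ E, z ∈ ℝⁿ with zᵢ = ⟨μ, vᵢ⟩, and r ≥ 1. Let m > 0 be the smallest 2r-sparse eigenvalue of K and M the largest (r+1)-sparse eigenvalue of K. Define g(S) = z_Sᵀ (K_{SS})⁻¹ z_S. Then g is (m/M)-weakly submodular when restricted to sets of bounded size: for all disjoint L, S ⊆ {1, …, n} with |L| + |S| ≤ 2r and |L| ≤ r, Σ_{j∈S} [g(L ∪ {j}) − g(L)] ≥ (m/M)·[g(L ∪ S) − g(L)]. -/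

import Mathlib

open Matrix
open scoped RealInnerProductSpace Classical

/-- The set of Rayleigh quotients `xᵀ K x / xᵀ x` of `K` over nonzero `k`-sparse vectors
`x ∈ ℝⁿ` (vectors with at most `k` nonzero entries).  Its infimum (resp. supremum) is the
smallest (resp. largest) `k`-sparse eigenvalue of `K`. -/
noncomputable def sparseRayleigh {n : ℕ} (K : Matrix (Fin n) (Fin n) ℝ) (k : ℕ) : Set ℝ :=
  {r | ∃ x : Fin n → ℝ, x ≠ 0 ∧ (Finset.univ.filter fun i => x i ≠ 0).card ≤ k ∧
    r = (x ⬝ᵥ (K *ᵥ x)) / (x ⬝ᵥ x)}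

/-- The SBQ set objective `g(S) = z_Sᵀ (K_{SS})⁻¹ z_S`, where `z_S` is the subvector of `z`
on indices in `S` and `K_{SS}` is the principal submatrix of `K` on `S`. -/
noncomputable def gObj {n : ℕ} (K : Matrix (Fin n) (Fin n) ℝ) (z : Fin n → ℝ)
    (S : Finset (Fin n)) : ℝ :=
  (fun i : S => z i.1) ⬝ᵥ
    ((K.submatrix (fun i : S => i.1) (fun j : S => j.1))⁻¹ *ᵥ fun i : S => z i.1)

lemma gObj_exists_opt {n : ℕ} (K : Matrix (Fin n) (Fin n) ℝ) (hK : K.PosDef) (z : Fin n → ℝ)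
    (S : Finset (Fin n)) : ∃ w : Fin n → ℝ, (∀ i, i ∉ S → w i = 0) ∧
      (∀ i ∈ S, (K *ᵥ w) i = z i) ∧ gObj K z S = z ⬝ᵥ w := by
  set A := K.submatrix (fun i : S => i.1) (fun j : S => j.1) with hA
  have hApd : A.PosDef := hK.submatrix Subtype.val_injective
  have hdet : IsUnit A.det := hApd.det_pos.ne'.isUnit
  set y := A⁻¹ *ᵥ (fun i : S => z i.1) with hy
  have hAy : A *ᵥ y = fun i : S => z i.1 := by
    rw [hy, Matrix.mulVec_mulVec, Matrix.mul_nonsing_inv _ hdet, Matrix.one_mulVec]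
  have key : ∀ f : Fin n → ℝ,
      ∑ i, f i * (if h : i ∈ S then y ⟨i, h⟩ else 0) = ∑ i : S, f i.1 * y i := by
    intro f
    rw [← Finset.sum_subset (Finset.subset_univ S), ← Finset.sum_coe_sort S]
    · refine Finset.sum_congr rfl fun i _ => ?_
      simp
    · intro i _ hi
      simp [hi]
  refine ⟨fun i => if h : i ∈ S then y ⟨i, h⟩ else 0, fun i hi => by simp [hi], ?_, ?_⟩
  · intro i hi
    have := congrFun hAy ⟨i, hi⟩
    simp only [Matrix.mulVec, dotProduct] at this ⊢
    rw [key, ← this]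
    rfl
  · simp only [dotProduct]
    rw [key]
    rfl

lemma quad_expand {n : ℕ} (K : Matrix (Fin n) (Fin n) ℝ) (hK : K.PosDef) (w d : Fin n → ℝ) :
    (w + d) ⬝ᵥ (K *ᵥ (w + d)) = w ⬝ᵥ (K *ᵥ w) + 2 * ((K *ᵥ w) ⬝ᵥ d) + d ⬝ᵥ (K *ᵥ d) := by
  have hs : Kᵀ = K := by
    have := hK.isHermitian.eq
    rwa [Matrix.conjTranspose_eq_transpose_of_trivial] at this
  have h1 : w ⬝ᵥ (K *ᵥ d) = (K *ᵥ w) ⬝ᵥ d := by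
    rw [Matrix.dotProduct_mulVec, ← Matrix.mulVec_transpose, hs]
  rw [Matrix.mulVec_add, add_dotProduct, dotProduct_add, dotProduct_add, h1,
    dotProduct_comm d (K *ᵥ w)]
  ring

lemma dot_congr_on {n : ℕ} (S : Finset (Fin n)) (a b w : Fin n → ℝ) (hw : ∀ i, i ∉ S → w i = 0)
    (h : ∀ i ∈ S, a i = b i) : a ⬝ᵥ w = b ⬝ᵥ w := by
  refine Finset.sum_congr rfl fun i _ => ?_
  by_cases hi : i ∈ S
  · rw [h i hi]
  · simp [hw i hi]

lemma quad_nonneg {n : ℕ} (K : Matrix (Fin n) (Fin n) ℝ) (hK : K.PosDef) (d : Fin n → ℝ) :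
    0 ≤ d ⬝ᵥ (K *ᵥ d) := by
  simpa using hK.posSemidef.dotProduct_mulVec_nonneg d

lemma gObj_ge {n : ℕ} (K : Matrix (Fin n) (Fin n) ℝ) (hK : K.PosDef) (z : Fin n → ℝ)
    (S : Finset (Fin n)) (x : Fin n → ℝ) (hx : ∀ i, i ∉ S → x i = 0) :
    2 * (z ⬝ᵥ x) - x ⬝ᵥ (K *ᵥ x) ≤ gObj K z S := by
  obtain ⟨w, hw0, hwz, hg⟩ := gObj_exists_opt K hK z S
  have h1 := quad_expand K hK w (x - w)
  have h2 := quad_nonneg K hK (x - w)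
  have h3 : (K *ᵥ w) ⬝ᵥ (x - w) = z ⬝ᵥ (x - w) :=
    dot_congr_on S _ _ _ (fun i hi => by simp [hx i hi, hw0 i hi]) hwz
  have h4 : (K *ᵥ w) ⬝ᵥ w = z ⬝ᵥ w := dot_congr_on S _ _ _ hw0 hwz
  rw [dotProduct_comm] at h4
  rw [add_sub_cancel, h3, h4, dotProduct_sub] at h1
  rw [hg]
  linarith

lemma sparse_bddBelow {n : ℕ} (K : Matrix (Fin n) (Fin n) ℝ) (hK : K.PosDef) (k : ℕ) :
    BddBelow (sparseRayleigh K k) := by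
  refine ⟨0, ?_⟩
  rintro _ ⟨x, -, -, rfl⟩
  refine div_nonneg (quad_nonneg K hK x) ?_
  exact Finset.sum_nonneg fun i _ => mul_self_nonneg _

lemma sparse_bddAbove {n : ℕ} (K : Matrix (Fin n) (Fin n) ℝ) (k : ℕ) :
    BddAbove (sparseRayleigh K k) := by
  refine ⟨∑ i, ∑ j, |K i j|, ?_⟩
  rintro _ ⟨x, -, -, rfl⟩
  have hxx : 0 ≤ x ⬝ᵥ x := Finset.sum_nonneg fun i _ => mul_self_nonneg _
  have hi : ∀ i, x i * x i ≤ x ⬝ᵥ x := fun i =>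
    Finset.single_le_sum (f := fun i => x i * x i) (fun i _ => mul_self_nonneg _)
      (Finset.mem_univ i)
  refine div_le_of_le_mul₀ hxx
    (Finset.sum_nonneg fun i _ => Finset.sum_nonneg fun j _ => abs_nonneg _) ?_
  have hexp : x ⬝ᵥ (K *ᵥ x) = ∑ i, ∑ j, x i * (K i j * x j) := by
    simp only [dotProduct, Matrix.mulVec, Finset.mul_sum]
  rw [hexp, Finset.sum_mul]
  refine Finset.sum_le_sum fun i _ => ?_
  rw [Finset.sum_mul]
  refine Finset.sum_le_sum fun j _ => ?_
  have hb : |x i * x j| ≤ x ⬝ᵥ x := by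
    rw [abs_le]
    constructor <;> nlinarith [hi i, hi j, sq_nonneg (x i + x j), sq_nonneg (x i - x j)]
  calc x i * (K i j * x j) = K i j * (x i * x j) := by ring
    _ ≤ |K i j * (x i * x j)| := le_abs_self _
    _ = |K i j| * |x i * x j| := abs_mul _ _
    _ ≤ |K i j| * (x ⬝ᵥ x) := by gcongr

/-- **(Lemma 4 of the paper.)** With `m > 0` the smallest `2r`-sparse eigenvalue of the
positive definite Gram matrix `K` and `M` its largest `(r+1)`-sparse eigenvalue, the
SBQ objective `g(S) = z_Sᵀ (K_{SS})⁻¹ z_S` is `(m/M)`-weakly submodular on sets of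
bounded size: for disjoint `L, S` with `|L| + |S| ≤ 2r` and `|L| ≤ r`,
`Σ_{j ∈ S} [g(L ∪ {j}) - g(L)] ≥ (m/M) [g(L ∪ S) - g(L)]`. -/
theorem gObj_weakly_submodular {E : Type*} [NormedAddCommGroup E] [InnerProductSpace ℝ E]
    {n : ℕ} (v : Fin n → E) (K : Matrix (Fin n) (Fin n) ℝ)
    (hK : ∀ i j, K i j = ⟪v i, v j⟫) (hKpd : K.PosDef)
    (μ : E) (z : Fin n → ℝ) (hz : ∀ i, z i = ⟪μ, v i⟫)
    (r : ℕ) (hr : 1 ≤ r)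
    (m M : ℝ) (hm : m = sInf (sparseRayleigh K (2 * r))) (hm0 : 0 < m)
    (hM : M = sSup (sparseRayleigh K (r + 1)))
    (L S : Finset (Fin n)) (hdisj : Disjoint L S)
    (hcard : L.card + S.card ≤ 2 * r) (hLcard : L.card ≤ r) :
    (m / M) * (gObj K z (L ∪ S) - gObj K z L) ≤
      ∑ j ∈ S, (gObj K z (insert j L) - gObj K z L) := by
  obtain ⟨w, hw0, hwz, hgL⟩ := gObj_exists_opt K hKpd z L
  obtain ⟨u, hu0, huz, hgU⟩ := gObj_exists_opt K hKpd z (L ∪ S)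
  have hww : w ⬝ᵥ (K *ᵥ w) = z ⬝ᵥ w := by
    rw [dotProduct_comm]; exact dot_congr_on L _ _ _ hw0 hwz
  have huu : u ⬝ᵥ (K *ᵥ u) = z ⬝ᵥ u := by
    rw [dotProduct_comm]; exact dot_congr_on (L ∪ S) _ _ _ hu0 huz
  set ρ : Fin n → ℝ := z - K *ᵥ w with hρ
  have hρL : ∀ i ∈ L, ρ i = 0 := fun i hi => by simp [hρ, hwz i hi]
  -- diagonal bound
  have hdiag : ∀ j, 0 < K j j ∧ K j j ≤ M := by
    intro j
    refine ⟨hKpd.diag_pos, ?_⟩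
    rw [hM]
    refine le_csSup (sparse_bddAbove K _) ⟨Pi.single j 1, by simp, ?_, ?_⟩
    · refine le_trans (Finset.card_le_card (t := {j}) ?_) (by simp)
      intro i hi
      by_contra h
      rw [Finset.mem_singleton] at h
      exact (Finset.mem_filter.mp hi).2 (Pi.single_eq_of_ne h _)
    · simp
  -- gain of a single element
  have hgain : ∀ j ∈ S, ρ j ^ 2 / M ≤ gObj K z (insert j L) - gObj K z L := by
    intro j hj
    obtain ⟨hj0, hjM⟩ := hdiag j
    have hM0 : 0 < M := hj0.trans_le hjM
    have h1 := gObj_ge K hKpd z (insert j L) (w + Pi.single j (ρ j / M)) (by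
      intro i hi
      simp only [Finset.mem_insert, not_or] at hi
      simp [hw0 i hi.2, hi.1])
    rw [quad_expand K hKpd, dotProduct_add, hww] at h1
    have h2 : (Pi.single j (ρ j / M) : Fin n → ℝ) ⬝ᵥ (K *ᵥ Pi.single j (ρ j / M))
        = K j j * (ρ j / M) ^ 2 := by
      simp; ring
    rw [h2, dotProduct_single, dotProduct_single] at h1
    have h3 : K j j * (ρ j / M) ^ 2 ≤ M * (ρ j / M) ^ 2 := by gcongr
    have h4 : M * (ρ j / M) ^ 2 = ρ j ^ 2 / M := by field_simp
    have h5 : ρ j ^ 2 / M = z j * (ρ j / M) - (K *ᵥ w) j * (ρ j / M) := by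
      rw [← sub_mul, ← Pi.sub_apply, ← hρ]; ring
    rw [hgL]
    linarith
  -- the total gain
  have htot : m * (gObj K z (L ∪ S) - gObj K z L) ≤ ∑ j ∈ S, ρ j ^ 2 := by
    set d := u - w with hd
    have hd0 : ∀ i, i ∉ L ∪ S → d i = 0 := by
      intro i hi
      have hiL : i ∉ L := fun h => hi (Finset.mem_union_left _ h)
      simp [hd, hu0 i hi, hw0 i hiL]
    have hdm : m * (d ⬝ᵥ d) ≤ d ⬝ᵥ (K *ᵥ d) := by
      by_cases hdz : d = 0
      · simp [hdz]
      have hpos : 0 < d ⬝ᵥ d := by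
        have : 0 ≤ d ⬝ᵥ d := Finset.sum_nonneg fun i _ => mul_self_nonneg _
        exact lt_of_le_of_ne this (fun h => hdz (dotProduct_self_eq_zero.mp h.symm))
      rw [← le_div_iff₀ hpos, hm]
      refine csInf_le (sparse_bddBelow K hKpd _) ⟨d, hdz, ?_, rfl⟩
      refine le_trans (Finset.card_le_card (t := L ∪ S) ?_)
        ((Finset.card_union_le _ _).trans hcard)
      intro i hi
      by_contra h
      simp only [Finset.mem_filter] at hi
      exact hi.2 (hd0 i h)
    have h1 := quad_expand K hKpd w d
    rw [show w + d = u by simp [hd], huu, hww] at h1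
    have h2 : ρ ⬝ᵥ d = ∑ j ∈ S, ρ j * d j := by
      refine (Finset.sum_subset (Finset.subset_univ S) ?_).symm
      intro i _ hi
      by_cases hiL : i ∈ L
      · simp [hρL i hiL]
      · simp [hd0 i (by simp [hi, hiL])]
    have h3 : ∑ j ∈ S, d j * d j ≤ d ⬝ᵥ d :=
      Finset.sum_le_sum_of_subset_of_nonneg (Finset.subset_univ S)
        fun i _ _ => mul_self_nonneg _
    have h4 : ρ ⬝ᵥ d = z ⬝ᵥ d - (K *ᵥ w) ⬝ᵥ d := sub_dotProduct _ _ _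
    have h5 : z ⬝ᵥ d = z ⬝ᵥ u - z ⬝ᵥ w := dotProduct_sub _ _ _
    have h6 : gObj K z (L ∪ S) - gObj K z L ≤ 2 * ∑ j ∈ S, ρ j * d j - m * ∑ j ∈ S, d j * d j := by
      rw [hgU, hgL, ← h2]
      have := mul_le_mul_of_nonneg_left h3 hm0.le
      linarith
    refine (mul_le_mul_of_nonneg_left h6 hm0.le).trans ?_
    rw [Finset.mul_sum, Finset.mul_sum, ← Finset.sum_sub_distrib, Finset.mul_sum]
    refine Finset.sum_le_sum fun j _ => ?_
    nlinarith [sq_nonneg (ρ j - m * d j)]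
  rcases S.eq_empty_or_nonempty with rfl | ⟨j, hj⟩
  · simp
  have hM0 : 0 < M := (hdiag j).1.trans_le (hdiag j).2
  refine le_trans ?_ (Finset.sum_le_sum hgain)
  rw [← Finset.sum_div, div_mul_eq_mul_div]
  gcongr
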